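/- Let λ ∈ ℝ with λ ≠ 0 and let Γ : ℝ² → ℝ be smooth. Define U = [[0, λ m1, 1], [λ n1, 0, λ m2], [1, λ n2, 0]], V = [[−f1 g1, g1/λ, −g1 g2], [f1/λ, −1/λ² + f1 g1 + f2 g2, g2/λ], [−f1 f2, f2/λ, −f2 g2]], and Ṽ = −λ Γ · [[0, m1, 0], [n1, 0, m2], [0, n2, 0]]. Then the zero-curvature equation ∂ₜU − ∂ₓ(V + Ṽ) + U·(V + Ṽ) − (V + Ṽ)·U = 0 holds identically on ℝ² if and only if (u1, u2, v1, v2) satisfies: ∂ₜm1 + ∂ₓ(Γ m1) + n2(g1 g2 − Γ) + m1(f2 g2 + 2 f1 g1) = 0, ∂ₜm2 + ∂ₓ(Γ m2) − n1(g1 g2 − Γ) − m2(f1 g1 + 2 f2 g2) = 0, ∂ₜn1 + ∂ₓ(Γ n1) − m2(f1 f2 − Γ) − n1(f2 g2 + 2 f1 g1) = 0, ∂ₜn2 + ∂ₓ(Γ n2) + m1(f1 f2 − Γ) + n2(f1 g1 + 2 f2 g2) = 0. -/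

import Mathlib

/-!
Since `m1 = u1 - ∂ₓ²u1` and so on, the auxiliary functions satisfy the first-order relations
`∂ₓf1 = n1 - g2`, `∂ₓf2 = g1 - n2`, `∂ₓg1 = f2 - m1`, `∂ₓg2 = m2 - f1`. Substituting them into
the nine entries of the zero-curvature expression, the three diagonal entries and the two corner
entries vanish identically, while the entries `(1,2)`, `(2,3)`, `(2,1)`, `(3,2)` become `lam`
times the left-hand sides of the four evolution equations. As `lam ≠ 0`, the equivalence follows.
-/

/-- Partial derivative with respect to the first (space) variable. -/
noncomputable def pX (f : ℝ × ℝ → ℝ) : ℝ × ℝ → ℝ :=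
  fun p => deriv (fun x => f (x, p.2)) p.1

/-- Partial derivative with respect to the second (time) variable. -/
noncomputable def pT (f : ℝ × ℝ → ℝ) : ℝ × ℝ → ℝ :=
  fun p => deriv (fun t => f (p.1, t)) p.2

theorem hasDerivAt_pX {f : ℝ × ℝ → ℝ} (hf : Differentiable ℝ f) (p : ℝ × ℝ) :
    HasDerivAt (fun x => f (x, p.2)) (pX f p) p.1 := by
  have h : DifferentiableAt ℝ (fun x => f (x, p.2)) p.1 := by fun_prop
  exact h.hasDerivAt

/-- `∂ₓ` is the Fréchet derivative in the direction `(1, 0)`, hence preserves smoothness. -/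
theorem contDiff_pX {f : ℝ × ℝ → ℝ} (hf : ContDiff ℝ (⊤ : ℕ∞) f) :
    ContDiff ℝ (⊤ : ℕ∞) (pX f) := by
  have hd : Differentiable ℝ f := hf.differentiable (by simp)
  have h : pX f = fun p => fderiv ℝ f p (1, 0) := by
    funext p
    have h1 : HasDerivAt (fun x : ℝ => (x, p.2)) ((1 : ℝ), (0 : ℝ)) p.1 :=
      (hasDerivAt_id p.1).prodMk (hasDerivAt_const p.1 p.2)
    exact ((hd p).hasFDerivAt.comp_hasDerivAt p.1 h1).deriv
  rw [h]
  exact (hf.fderiv_right (by simp)).clm_apply contDiff_const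

theorem pX_add {f g : ℝ × ℝ → ℝ} (hf : Differentiable ℝ f) (hg : Differentiable ℝ g)
    (p : ℝ × ℝ) : pX (fun q => f q + g q) p = pX f p + pX g p :=
  ((hasDerivAt_pX hf p).add (hasDerivAt_pX hg p)).deriv

theorem pX_sub {f g : ℝ × ℝ → ℝ} (hf : Differentiable ℝ f) (hg : Differentiable ℝ g)
    (p : ℝ × ℝ) : pX (fun q => f q - g q) p = pX f p - pX g p :=
  ((hasDerivAt_pX hf p).sub (hasDerivAt_pX hg p)).deriv

theorem pX_mul {f g : ℝ × ℝ → ℝ} (hf : Differentiable ℝ f) (hg : Differentiable ℝ g)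
    (p : ℝ × ℝ) : pX (fun q => f q * g q) p = pX f p * g p + f p * pX g p :=
  ((hasDerivAt_pX hf p).mul (hasDerivAt_pX hg p)).deriv

theorem pX_neg (f : ℝ × ℝ → ℝ) (p : ℝ × ℝ) : pX (fun q => -f q) p = -pX f p := by
  simp [pX]

theorem pX_const_add (c : ℝ) (f : ℝ × ℝ → ℝ) (p : ℝ × ℝ) :
    pX (fun q => c + f q) p = pX f p := by
  simp [pX]

theorem pX_const_mul (c : ℝ) (f : ℝ × ℝ → ℝ) (p : ℝ × ℝ) :
    pX (fun q => c * f q) p = c * pX f p := by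
  simp [pX]

theorem pT_const (c : ℝ) (p : ℝ × ℝ) : pT (fun _ => c) p = 0 := by
  simp [pT]

theorem pT_const_mul (c : ℝ) (f : ℝ × ℝ → ℝ) (p : ℝ × ℝ) :
    pT (fun q => c * f q) p = c * pT f p := by
  simp [pT]

/-- The shape of the entries `(1,2)`, `(2,1)`, `(2,3)`, `(3,2)` of `V + W`: a term `f / lam` of `V`
plus a term `-lam * Γ * m` of `W`. -/
theorem pX_div_add {f Γ m : ℝ × ℝ → ℝ} (hf : Differentiable ℝ f) (hΓ : Differentiable ℝ Γ)
    (hm : Differentiable ℝ m) (lam : ℝ) (p : ℝ × ℝ) :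
    pX (fun q => f q / lam + -(lam * Γ q * m q)) p
      = pX f p / lam - lam * pX (fun q => Γ q * m q) p := by
  have h : (fun q => f q / lam + -(lam * Γ q * m q))
      = fun q => lam⁻¹ * f q + (-lam) * (Γ q * m q) := by
    funext q; ring
  rw [h, pX_add (by fun_prop) (by fun_prop), pX_const_mul, pX_const_mul]
  ring

theorem stmt_2
    (u1 u2 v1 v2 Γ : ℝ × ℝ → ℝ)
    (hu1 : ContDiff ℝ (⊤ : ℕ∞) u1) (hu2 : ContDiff ℝ (⊤ : ℕ∞) u2)
    (hv1 : ContDiff ℝ (⊤ : ℕ∞) v1) (hv2 : ContDiff ℝ (⊤ : ℕ∞) v2)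
    (hΓ : ContDiff ℝ (⊤ : ℕ∞) Γ)
    (lam : ℝ) (hlam : lam ≠ 0)
    (m1 m2 n1 n2 f1 f2 g1 g2 : ℝ × ℝ → ℝ)
    (hm1 : m1 = fun p => u1 p - pX (pX u1) p)
    (hm2 : m2 = fun p => u2 p - pX (pX u2) p)
    (hn1 : n1 = fun p => v1 p - pX (pX v1) p)
    (hn2 : n2 = fun p => v2 p - pX (pX v2) p)
    (hf1 : f1 = fun p => u2 p - pX v1 p)
    (hf2 : f2 = fun p => u1 p + pX v2 p)
    (hg1 : g1 = fun p => v2 p + pX u1 p)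
    (hg2 : g2 = fun p => v1 p - pX u2 p)
    (U V W : ℝ × ℝ → Matrix (Fin 3) (Fin 3) ℝ)
    (hU : U = fun p => !![0, lam * m1 p, 1;
                          lam * n1 p, 0, lam * m2 p;
                          1, lam * n2 p, 0])
    (hV : V = fun p => !![-(f1 p * g1 p), g1 p / lam, -(g1 p * g2 p);
                          f1 p / lam, -(1 / lam ^ 2) + f1 p * g1 p + f2 p * g2 p, g2 p / lam;
                          -(f1 p * f2 p), f2 p / lam, -(f2 p * g2 p)])
    (hW : W = fun p => (-lam * Γ p) • !![0, m1 p, 0;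
                                         n1 p, 0, m2 p;
                                         0, n2 p, 0]) :
    (∀ p : ℝ × ℝ, ∀ i j : Fin 3,
        pT (fun q => U q i j) p - pX (fun q => V q i j + W q i j) p
          + (U p * (V p + W p) - (V p + W p) * U p) i j = 0)
    ↔
    (∀ p : ℝ × ℝ,
        pT m1 p + pX (fun q => Γ q * m1 q) p + n2 p * (g1 p * g2 p - Γ p)
          + m1 p * (f2 p * g2 p + 2 * f1 p * g1 p) = 0 ∧
        pT m2 p + pX (fun q => Γ q * m2 q) p - n1 p * (g1 p * g2 p - Γ p)
          - m2 p * (f1 p * g1 p + 2 * f2 p * g2 p) = 0 ∧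
        pT n1 p + pX (fun q => Γ q * n1 q) p - m2 p * (f1 p * f2 p - Γ p)
          - n1 p * (f2 p * g2 p + 2 * f1 p * g1 p) = 0 ∧
        pT n2 p + pX (fun q => Γ q * n2 q) p + m1 p * (f1 p * f2 p - Γ p)
          + n2 p * (f1 p * g1 p + 2 * f2 p * g2 p) = 0) := by
  have du1 : Differentiable ℝ u1 := hu1.differentiable (by simp)
  have du2 : Differentiable ℝ u2 := hu2.differentiable (by simp)
  have dv1 : Differentiable ℝ v1 := hv1.differentiable (by simp)
  have dv2 : Differentiable ℝ v2 := hv2.differentiable (by simp)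
  have dΓ : Differentiable ℝ Γ := hΓ.differentiable (by simp)
  have dxu1 : Differentiable ℝ (pX u1) := (contDiff_pX hu1).differentiable (by simp)
  have dxu2 : Differentiable ℝ (pX u2) := (contDiff_pX hu2).differentiable (by simp)
  have dxv1 : Differentiable ℝ (pX v1) := (contDiff_pX hv1).differentiable (by simp)
  have dxv2 : Differentiable ℝ (pX v2) := (contDiff_pX hv2).differentiable (by simp)
  have dm1 : Differentiable ℝ m1 := by
    rw [hm1]; exact du1.sub ((contDiff_pX (contDiff_pX hu1)).differentiable (by simp))
  have dm2 : Differentiable ℝ m2 := by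
    rw [hm2]; exact du2.sub ((contDiff_pX (contDiff_pX hu2)).differentiable (by simp))
  have dn1 : Differentiable ℝ n1 := by
    rw [hn1]; exact dv1.sub ((contDiff_pX (contDiff_pX hv1)).differentiable (by simp))
  have dn2 : Differentiable ℝ n2 := by
    rw [hn2]; exact dv2.sub ((contDiff_pX (contDiff_pX hv2)).differentiable (by simp))
  have df1 : Differentiable ℝ f1 := by rw [hf1]; exact du2.sub dxv1
  have df2 : Differentiable ℝ f2 := by rw [hf2]; exact du1.add dxv2
  have dg1 : Differentiable ℝ g1 := by rw [hg1]; exact dv2.add dxu1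
  have dg2 : Differentiable ℝ g2 := by rw [hg2]; exact dv1.sub dxu2
  have ef1 : ∀ p, pX f1 p = n1 p - g2 p := fun p => by
    rw [hf1, pX_sub du2 dxv1, hn1, hg2]; ring
  have ef2 : ∀ p, pX f2 p = g1 p - n2 p := fun p => by
    rw [hf2, pX_add du1 dxv2, hn2, hg1]; ring
  have eg1 : ∀ p, pX g1 p = f2 p - m1 p := fun p => by
    rw [hg1, pX_add dv2 dxu1, hm1, hf2]; ring
  have eg2 : ∀ p, pX g2 p = m2 p - f1 p := fun p => by
    rw [hg2, pX_sub dv1 dxu2, hm2, hf1]; ring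
  -- From here on only these first-order relations matter, not the formulas in terms of `u`, `v`.
  clear hm1 hm2 hn1 hn2 hf1 hf2 hg1 hg2
  have e22 : ∀ p, pX (fun q => -(lam ^ 2)⁻¹ + f1 q * g1 q + f2 q * g2 q) p
      = pX f1 p * g1 p + f1 p * pX g1 p + (pX f2 p * g2 p + f2 p * pX g2 p) := fun p => by
    simp only [add_assoc]
    rw [pX_const_add, pX_add (by fun_prop) (by fun_prop), pX_mul df1 dg1, pX_mul df2 dg2]
    ring
  subst hU hV hW
  refine forall_congr' fun p => ?_
  simp only [Fin.forall_fin_succ, Matrix.mul_apply, Matrix.sub_apply, Fin.sum_univ_succ]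
  simp [pT_const, pT_const_mul, pX_neg, pX_div_add, pX_mul, *]
  constructor
  · rintro ⟨⟨-, h12, -⟩, ⟨h21, -, h23⟩, -, h32, -⟩
    refine ⟨?_, ?_, ?_, ?_⟩
    · linear_combination (norm := (field_simp; ring)) h12 / lam
    · linear_combination (norm := (field_simp; ring)) h23 / lam
    · linear_combination (norm := (field_simp; ring)) h21 / lam
    · linear_combination (norm := (field_simp; ring)) h32 / lam
  · rintro ⟨k1, k2, k3, k4⟩
    refine ⟨⟨?_, ?_, ?_⟩, ⟨?_, ?_, ?_⟩, ?_, ?_, ?_⟩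
    · field_simp; ring
    · linear_combination (norm := (field_simp; ring)) lam * k1
    · field_simp; ring
    · linear_combination (norm := (field_simp; ring)) lam * k3
    · field_simp; ring
    · linear_combination (norm := (field_simp; ring)) lam * k2
    · field_simp; ring
    · linear_combination (norm := (field_simp; ring)) lam * k4
    · field_simp; ring
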